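/- arXiv:2410.19339 — 7 statements merged into one kernel-verified Lean document; each statement's English description precedes it below -/
import Mathlib

section
/- Let d ≥ 2 and let F be a multilinear function on a box B = Π_{i=1}^d [a_i, b_i] with 0 ≤ a_i < b_i ≤ 1 for each i. Then the following are equivalent: (1) |F(u) − F(v)| ≤ Σ_{i=1}^d |u_i − v_i| for all u, v ∈ B; (2) |F(u) − F(v)| ≤ Σ_{i=1}^d |u_i − v_i| for all u, v with u_i, v_i ∈ {a_i, b_i} for every i (i.e., the Lipschitz condition holds on the vertices of B). -/
/-!
A function that is affine in each variable attains its maximum over a box at a vertex: moving one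
coordinate at a time to one of its endpoints does not decrease the value for a suitable choice of
endpoint (`le_of_le_on_vertices`). For fixed `i`, the difference of the values of `F` on the two
faces `u i = b i` and `u i = a i` is itself multilinear (`multilinearOnBox_faceDiff`), so its bound
by `b i - a i` at the vertices extends to the whole box. Since `F` is affine in the `i`-th variable,
this says that its slope there is at most `1` in absolute value (`abs_update_sub_update_le`), and
changing the coordinates of `v` into those of `u` one by one gives the `ℓ¹` bound.
-/

namespace QC

/-- A point lies in the unit cube `[0,1]^d`. -/
def InCube {d : ℕ} (u : Fin d → ℝ) : Prop := ∀ i, u i ∈ Set.Icc (0:ℝ) 1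

/-- A `d`-quasi-copula: boundary conditions, monotonicity in each variable,
and the `ℓ¹`-Lipschitz condition, on the unit cube. -/
structure IsQuasiCopula (d : ℕ) (Q : (Fin d → ℝ) → ℝ) : Prop where
  mem : ∀ u, InCube u → Q u ∈ Set.Icc (0:ℝ) 1
  bc0 : ∀ u, InCube u → (∃ i, u i = 0) → Q u = 0
  bc1 : ∀ (i : Fin d), ∀ t ∈ Set.Icc (0:ℝ) 1,
      Q (fun j => if j = i then t else 1) = t
  mono : ∀ (i : Fin d) (u v : Fin d → ℝ), InCube u → InCube v →
      (∀ j, j ≠ i → u j = v j) → u i ≤ v i → Q u ≤ Q v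
  lip : ∀ u v, InCube u → InCube v → |Q u - Q v| ≤ ∑ i, |u i - v i|

/-- `‖I‖₁` for a multi-index `I ∈ {0,1}^d`. -/
def normOne {d : ℕ} (I : Fin d → Bool) : ℕ :=
  (Finset.univ.filter fun k => I k = true).card

/-- The vertex `x_I` of the box `Π [a_i, b_i]`. -/
def vertex {d : ℕ} (a b : Fin d → ℝ) (I : Fin d → Bool) : Fin d → ℝ :=
  fun k => if I k then b k else a k

/-- The `Q`-volume of the box `Π [a_i, b_i]`. -/
def boxVolume {d : ℕ} (Q : (Fin d → ℝ) → ℝ) (a b : Fin d → ℝ) : ℝ :=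
  ∑ I : Fin d → Bool, (-1 : ℝ) ^ (d - normOne I) * Q (vertex a b I)

/-- `Π [a_i, b_i]` is a `d`-box inside `[0,1]^d` with `a_i < b_i`. -/
def IsBox {d : ℕ} (a b : Fin d → ℝ) : Prop :=
  ∀ i, 0 ≤ a i ∧ a i < b i ∧ b i ≤ 1

/-- `G_d(x) = Σ x_i - d + 1`. -/
def Gd {d : ℕ} (x : Fin d → ℝ) : ℝ := (∑ i, x i) - d + 1

/-- `H_d(x) = min { x_1, …, x_d }`. -/
noncomputable def Hd {d : ℕ} (x : Fin d → ℝ) : ℝ := ⨅ i, x i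

/-- `I ∼_ℓ J` for multi-indices in `{0,1}^d`: `J - I = e^(ℓ)`. -/
def Adj2 {d : ℕ} (I J : Fin d → Bool) (ℓ : Fin d) : Prop :=
  I ℓ = false ∧ J ℓ = true ∧ ∀ k, k ≠ ℓ → I k = J k

/-- The grid point `x_I ∈ Π {a_i, 1}` for `I ∈ {0,1}^d`. -/
def xI2 {d : ℕ} (a : Fin d → ℝ) (I : Fin d → Bool) : Fin d → ℝ :=
  fun k => if I k then 1 else a k

/-- The grid point `x_I ∈ Π {a_i, b_i, 1}` for `I ∈ {0,1,2}^d`. -/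
def xI3 {d : ℕ} (a b : Fin d → ℝ) (I : Fin d → Fin 3) : Fin d → ℝ :=
  fun k => if I k = 0 then a k else if I k = 1 then b k else 1

/-- `I ∼_ℓ J` for multi-indices in `{0,1,2}^d`: `J - I = e^(ℓ)`. -/
def Adj3 {d : ℕ} (I J : Fin d → Fin 3) (ℓ : Fin d) : Prop :=
  ((J ℓ : ℕ) = (I ℓ : ℕ) + 1) ∧ ∀ k, k ≠ ℓ → I k = J k

/-- The extended domain `D^ext = Π {a_i,1} ∪ ⋃ L_i`, where
`L_i = { x ∈ [0,1]^d : x_i = 0 }`. -/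
def Dext2 {d : ℕ} (a : Fin d → ℝ) (x : Fin d → ℝ) : Prop :=
  (∃ I : Fin d → Bool, x = xI2 a I) ∨ (InCube x ∧ ∃ i, x i = 0)

/-- The extended domain `D^ext = Π {a_i,b_i,1} ∪ ⋃ L_i`. -/
def Dext3 {d : ℕ} (a b : Fin d → ℝ) (x : Fin d → ℝ) : Prop :=
  (∃ I : Fin d → Fin 3, x = xI3 a b I) ∨ (InCube x ∧ ∃ i, x i = 0)

/-- Feasibility for the linear programs (3.1)/(3.4) on the `2^d` grid. -/
def Feasible2 {d : ℕ} (a b : Fin d → ℝ) (q : (Fin d → Bool) → ℝ) : Prop :=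
  (∀ i, 0 ≤ a i ∧ a i < b i ∧ b i ≤ 1) ∧
  (∀ (ℓ : Fin d) (I J : Fin d → Bool), Adj2 I J ℓ →
      0 ≤ q J - q I ∧ q J - q I ≤ b ℓ - a ℓ) ∧
  (∀ I, max 0 (Gd (vertex a b I)) ≤ q I ∧ q I ≤ Hd (vertex a b I))

/-- The objective `V(q) = Σ_{I ∈ {0,1}^d} (-1)^(d-‖I‖₁) q_I`. -/
def Vq {d : ℕ} (q : (Fin d → Bool) → ℝ) : ℝ :=
  ∑ I : Fin d → Bool, (-1 : ℝ) ^ (d - normOne I) * q I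

/-- Feasibility for the linear program (3.3) on the `3^d` grid. -/
def Feasible3 {d : ℕ} (a b : Fin d → ℝ) (q : (Fin d → Fin 3) → ℝ) : Prop :=
  (∀ i, 0 ≤ a i ∧ a i < b i ∧ b i ≤ 1) ∧
  (∀ (ℓ : Fin d) (I J : Fin d → Fin 3), Adj3 I J ℓ → J ℓ = 1 →
      0 ≤ q J - q I ∧ q J - q I ≤ b ℓ - a ℓ) ∧
  (∀ (ℓ : Fin d) (I J : Fin d → Fin 3), Adj3 I J ℓ → J ℓ = 2 →
      0 ≤ q J - q I ∧ q J - q I ≤ 1 - b ℓ) ∧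
  (∀ I, max 0 (Gd (xI3 a b I)) ≤ q I ∧ q I ≤ Hd (xI3 a b I))

/-- The objective `V(q)` for the `3^d` grid: the sum runs over multi-indices
with entries in `{0,1}` only. -/
def Vq3 {d : ℕ} (q : (Fin d → Fin 3) → ℝ) : ℝ :=
  ∑ I : Fin d → Bool, (-1 : ℝ) ^ (d - normOne I) * q (fun k => if I k then 1 else 0)

/-- A point of a box all of whose coordinates are endpoints. -/
def IsVertexPoint {d : ℕ} (a b : Fin d → ℝ) (u : Fin d → ℝ) : Prop :=
  ∀ i, u i = a i ∨ u i = b i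

/-- A point lies in the box `Π [a_i, b_i]`. -/
def InBox {d : ℕ} (a b : Fin d → ℝ) (u : Fin d → ℝ) : Prop :=
  ∀ i, u i ∈ Set.Icc (a i) (b i)

/-- `F` is multilinear on the box `Π [a_i, b_i]`: affine separately in each
variable (on the box). -/
def MultilinearOnBox {d : ℕ} (a b : Fin d → ℝ) (F : (Fin d → ℝ) → ℝ) : Prop :=
  ∀ (i : Fin d) (u : Fin d → ℝ), InBox a b u →
    ∃ c e : ℝ, ∀ t ∈ Set.Icc (a i) (b i), F (Function.update u i t) = c * t + e

theorem InBox.update {d : ℕ} {a b u : Fin d → ℝ} (hu : InBox a b u) {i : Fin d} {t : ℝ}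
    (ht : t ∈ Set.Icc (a i) (b i)) : InBox a b (Function.update u i t) := by
  intro j
  rcases eq_or_ne j i with rfl | hj
  · simpa using ht
  · simpa [hj] using hu j

theorem IsVertexPoint.inBox {d : ℕ} {a b u : Fin d → ℝ} (hab : IsBox a b)
    (hu : IsVertexPoint a b u) : InBox a b u := by
  intro i
  have h := (hab i).2.1.le
  rcases hu i with h' | h' <;> rw [h'] <;> simp [h]

theorem IsVertexPoint.update {d : ℕ} {a b u : Fin d → ℝ} (hu : IsVertexPoint a b u) {i : Fin d}
    {t : ℝ} (ht : t = a i ∨ t = b i) : IsVertexPoint a b (Function.update u i t) := by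
  intro j
  rcases eq_or_ne j i with rfl | hj
  · simpa using ht
  · simpa [hj] using hu j

/-- Maximum principle: a multilinear function on a box is bounded above by any upper bound for its
values at the vertices. -/
theorem le_of_le_on_vertices {d : ℕ} {a b : Fin d → ℝ} (hab : IsBox a b)
    {G : (Fin d → ℝ) → ℝ} (hG : MultilinearOnBox a b G) {C : ℝ}
    (hC : ∀ u, IsVertexPoint a b u → G u ≤ C) {u : Fin d → ℝ} (hu : InBox a b u) :
    G u ≤ C := by
  -- `S` is the set of coordinates that are allowed to lie strictly between the endpoints.
  have key : ∀ S : Finset (Fin d), ∀ u, InBox a b u →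
      (∀ j, j ∉ S → u j = a j ∨ u j = b j) → G u ≤ C := by
    intro S
    induction S using Finset.induction_on with
    | empty => exact fun u _ h => hC u fun j => h j (Finset.notMem_empty j)
    | insert j S hj ih =>
      intro u hu h
      have hab' := (hab j).2.1.le
      have endpoint : ∀ t, t = a j ∨ t = b j → G (Function.update u j t) ≤ C := by
        intro t ht
        refine ih _ (hu.update ?_) fun k hk => ?_
        · rcases ht with rfl | rfl <;> simp [hab']
        · rcases eq_or_ne k j with rfl | hkj
          · simpa using ht
          · simpa [hkj] using h k (by simp [hkj, hk])
      obtain ⟨c, e, hce⟩ := hG j u hu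
      have h1 := endpoint (a j) (Or.inl rfl)
      have h2 := endpoint (b j) (Or.inr rfl)
      rw [hce _ (Set.left_mem_Icc.2 hab')] at h1
      rw [hce _ (Set.right_mem_Icc.2 hab')] at h2
      have h3 := hce _ (hu j)
      rw [Function.update_eq_self] at h3
      rw [h3]
      obtain ⟨hl, hr⟩ := hu j
      rcases le_total 0 c with hc | hc <;> nlinarith
  exact key Finset.univ u hu fun j hj => absurd (Finset.mem_univ j) hj

/-- The difference between the values of a multilinear function on two parallel slices of the box
is multilinear (and constant in the variable that indexes the slices). -/
theorem multilinearOnBox_faceDiff {d : ℕ} {a b : Fin d → ℝ} {F : (Fin d → ℝ) → ℝ}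
    (hF : MultilinearOnBox a b F) (i : Fin d) {s t : ℝ} (hs : s ∈ Set.Icc (a i) (b i))
    (ht : t ∈ Set.Icc (a i) (b i)) :
    MultilinearOnBox a b fun u => F (Function.update u i s) - F (Function.update u i t) := by
  intro j u hu
  rcases eq_or_ne j i with rfl | hj
  · exact ⟨0, F (Function.update u j s) - F (Function.update u j t), by simp⟩
  · obtain ⟨c, e, h⟩ := hF j _ (hu.update hs)
    obtain ⟨c', e', h'⟩ := hF j _ (hu.update ht)
    refine ⟨c - c', e - e', fun x hx => ?_⟩
    simp only
    rw [Function.update_comm hj, Function.update_comm hj, h x hx, h' x hx]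
    ring

/-- The Lipschitz condition at the vertices bounds the variation of `F` along any segment of the box
parallel to a coordinate axis. -/
theorem abs_update_sub_update_le {d : ℕ} {a b : Fin d → ℝ} (hab : IsBox a b)
    {F : (Fin d → ℝ) → ℝ} (hF : MultilinearOnBox a b F)
    (hV : ∀ u v : Fin d → ℝ, IsVertexPoint a b u → IsVertexPoint a b v →
      |F u - F v| ≤ ∑ i, |u i - v i|)
    {u : Fin d → ℝ} (hu : InBox a b u) (i : Fin d) {s t : ℝ} (hs : s ∈ Set.Icc (a i) (b i))
    (ht : t ∈ Set.Icc (a i) (b i)) :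
    |F (Function.update u i s) - F (Function.update u i t)| ≤ |s - t| := by
  have hlt := (hab i).2.1
  have ha : a i ∈ Set.Icc (a i) (b i) := Set.left_mem_Icc.2 hlt.le
  have hb : b i ∈ Set.Icc (a i) (b i) := Set.right_mem_Icc.2 hlt.le
  have hvert : ∀ w, IsVertexPoint a b w →
      |F (Function.update w i (b i)) - F (Function.update w i (a i))| ≤ b i - a i := by
    intro w hw
    refine (hV _ _ (hw.update (Or.inr rfl)) (hw.update (Or.inl rfl))).trans_eq ?_
    rw [Finset.sum_eq_single i]
    · simpa using hlt.le
    · intro j _ hj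
      simp [hj]
    · simp
  have h1 := le_of_le_on_vertices hab (multilinearOnBox_faceDiff hF i hb ha)
    (fun w hw => (abs_le.1 (hvert w hw)).2) hu
  have h2 := le_of_le_on_vertices hab (multilinearOnBox_faceDiff hF i ha hb)
    (C := b i - a i) (fun w hw => by linarith [(abs_le.1 (hvert w hw)).1]) hu
  obtain ⟨c, e, h⟩ := hF i u hu
  simp only [h _ ha, h _ hb] at h1 h2
  have hc : |c| ≤ 1 := abs_le.2 ⟨by nlinarith, by nlinarith⟩
  rw [h s hs, h t ht, show c * s + e - (c * t + e) = c * (s - t) by ring, abs_mul]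
  exact mul_le_of_le_one_left (abs_nonneg _) hc

/-- a multilinear function on a box satisfies the ℓ¹-Lipschitz
condition on the whole box iff it satisfies it on the vertices of the box. -/
theorem multilinear_lipschitz_iff_lipschitz_on_vertices
    (d : ℕ) (hd : 2 ≤ d) (a b : Fin d → ℝ) (hab : IsBox a b)
    (F : (Fin d → ℝ) → ℝ) (hml : MultilinearOnBox a b F) :
    (∀ u v : Fin d → ℝ, InBox a b u → InBox a b v →
        |F u - F v| ≤ ∑ i, |u i - v i|) ↔
    (∀ u v : Fin d → ℝ, IsVertexPoint a b u → IsVertexPoint a b v →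
        |F u - F v| ≤ ∑ i, |u i - v i|) := by
  refine ⟨fun h u v hu hv => h u v (hu.inBox hab) (hv.inBox hab), fun hV u v hu hv => ?_⟩
  have key : ∀ S : Finset (Fin d), |F (S.piecewise u v) - F v| ≤ ∑ i ∈ S, |u i - v i| := by
    intro S
    induction S using Finset.induction_on with
    | empty => simp
    | insert j S hj ih =>
      have hw : InBox a b (S.piecewise u v) := by
        intro k
        by_cases hk : k ∈ S
        · simpa [hk] using hu k
        · simpa [hk] using hv k
      have hstep := abs_update_sub_update_le hab hml hV hw j (hu j) (hv j)
      -- The `j`-th coordinate of `S.piecewise u v` is still `v j`, as `j ∉ S`.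
      have hself : Function.update (S.piecewise u v) j (v j) = S.piecewise u v := by
        rw [Function.update_eq_self_iff, Finset.piecewise_eq_of_notMem _ _ _ hj]
      rw [hself] at hstep
      rw [Finset.piecewise_insert, Finset.sum_insert hj]
      exact (abs_sub_le _ (F (S.piecewise u v)) _).trans (add_le_add hstep ih)
  simpa using key Finset.univ

end QC
end

section
/- Fix d ≥ 2. Let a_1, …, a_d ∈ [0,1), for I ∈ {0,1}^d let x_I ∈ [0,1]^d be the point with (x_I)_k = a_k if I_k = 0 and (x_I)_k = 1 if I_k = 1, and let q_I ∈ [0,1] for I ∈ {0,1}^d satisfy: 0 ≤ q_J − q_I ≤ 1 − a_ℓ for all ℓ = 1,…,d and all I ∼_ℓ J, and G_d(x_I) ≤ q_I ≤ H_d(x_I) for all I ∈ {0,1}^d. Let D = Π_{i=1}^d {a_i, 1}, let L_i = {x ∈ [0,1]^d : x_i = 0}, and let D^ext = D ∪ (⋃_{i=1}^d L_i). Then the function Q : D^ext → ℝ defined by Q(x_I) = q_I for I ∈ {0,1}^d and Q(x) = 0 for x ∈ L_i is well defined (i.e., q_I = 0 whenever some coordinate of x_I equals 0) and satisfies on D^ext: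 Q(x) = 0 whenever some coordinate of x is 0; Q(1,…,1,t,1,…,1) = t for every point of D^ext of this form; Q is nondecreasing in each variable; and |Q(u) − Q(v)| ≤ Σ_{i=1}^d |u_i − v_i| for all u, v ∈ D^ext. -/
/-!
The whole theorem follows from one one-sided estimate: for all `u, v ∈ D^ext`,
`Q u - Q v ≤ ∑ i, max (u i - v i) 0`. If `u ≤ v` coordinatewise the right-hand side vanishes, which
gives monotonicity; bounding `max (u i - v i) 0` by `|u i - v i|` and exchanging `u` and `v` gives
the Lipschitz condition.

If both points are on the grid, the estimate is obtained by changing the multi-index of `v` into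
that of `u` one coordinate at a time (`sub_le_sum_posPart`): raising coordinate `ℓ` from `0` to `1`
costs at most `1 - a ℓ`, and lowering it does not increase `q`. If `u` lies on a face `L_i`, then
`Q u = 0 ≤ Q v`. If `u` is a grid point and `v k = 0`, then `Q u ≤ H_d(u) ≤ u k = u k - v k`.

The boundary values come from `G_d ≤ q ≤ H_d`: at `(1, …, 1, t, 1, …, 1)` one has `G_d = t` and
`H_d ≤ t`.
-/

namespace QC

theorem Hd_le {d : ℕ} (x : Fin d → ℝ) (k : Fin d) : Hd x ≤ x k :=
  ciInf_le (Set.finite_range x).bddBelow k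

theorem Gd_one_except {d : ℕ} (i : Fin d) (t : ℝ) :
    Gd (fun j => if j = i then t else 1) = t := by
  have h : ∀ j : Fin d, (if j = i then t else (1:ℝ)) = 1 + (if j = i then t - 1 else 0) := by
    intro j; split_ifs <;> ring
  simp [Gd, h, Finset.sum_add_distrib]

/-- The one-sided estimate along the path from `J` to `I` that switches the coordinates in `S`. -/
theorem piecewise_sub_le {d : ℕ} {a : Fin d → ℝ} {q : (Fin d → Bool) → ℝ}
    (hadj : ∀ (ℓ : Fin d) (I J : Fin d → Bool), Adj2 I J ℓ →
        0 ≤ q J - q I ∧ q J - q I ≤ 1 - a ℓ)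
    (I J : Fin d → Bool) (S : Finset (Fin d)) :
    q (S.piecewise I J) - q J ≤ ∑ k ∈ S, max (xI2 a I k - xI2 a J k) 0 := by
  induction S using Finset.induction_on with
  | empty => simp
  | insert l S hl ih =>
    rw [Finset.sum_insert hl, Finset.piecewise_insert]
    set K := S.piecewise I J with hK
    have hKl : K l = J l := by simp [hK, hl]
    suffices h : q (Function.update K l (I l)) - q K ≤ max (xI2 a I l - xI2 a J l) 0 by linarith
    cases hI : I l <;> cases hJ : J l
    · have : Function.update K l false = K := by
        rw [← hJ, ← hKl, Function.update_eq_self]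
      simp [this]
    · have h := (hadj l (Function.update K l false) K
        ⟨by simp, by rw [hKl, hJ], fun k hk => by simp [hk]⟩).1
      exact le_max_of_le_right (by linarith)
    · have h := (hadj l K (Function.update K l true)
        ⟨by rw [hKl, hJ], by simp, fun k hk => by simp [hk]⟩).2
      exact le_max_of_le_left (by simpa [xI2, hI, hJ] using h)
    · have : Function.update K l true = K := by
        rw [← hJ, ← hKl, Function.update_eq_self]
      simp [this]

theorem sub_le_sum_posPart {d : ℕ} {a : Fin d → ℝ} {q : (Fin d → Bool) → ℝ}
    (hadj : ∀ (ℓ : Fin d) (I J : Fin d → Bool), Adj2 I J ℓ →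
        0 ≤ q J - q I ∧ q J - q I ≤ 1 - a ℓ)
    (I J : Fin d → Bool) :
    q I - q J ≤ ∑ k, max (xI2 a I k - xI2 a J k) 0 := by
  simpa using piecewise_sub_le hadj I J Finset.univ

/-- the function defined by `q` on the grid `Π {a_i, 1}` and by `0`
on the faces `L_i = {x : x_i = 0}` is well defined and satisfies the boundary,
monotonicity and Lipschitz conditions on `D^ext`. -/
theorem extension_two_grid
    (d : ℕ) (hd : 2 ≤ d) (a : Fin d → ℝ)
    (ha : ∀ i, a i ∈ Set.Ico (0:ℝ) 1)
    (q : (Fin d → Bool) → ℝ) (hq01 : ∀ I, q I ∈ Set.Icc (0:ℝ) 1)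
    (hadj : ∀ (ℓ : Fin d) (I J : Fin d → Bool), Adj2 I J ℓ →
        0 ≤ q J - q I ∧ q J - q I ≤ 1 - a ℓ)
    (hGH : ∀ I, Gd (xI2 a I) ≤ q I ∧ q I ≤ Hd (xI2 a I)) :
    (∀ I : Fin d → Bool, (∃ k, xI2 a I k = 0) → q I = 0) ∧
    (∀ Q : (Fin d → ℝ) → ℝ,
      (∀ I : Fin d → Bool, Q (xI2 a I) = q I) →
      (∀ x : Fin d → ℝ, InCube x → (∃ i, x i = 0) → Q x = 0) →
      ((∀ x : Fin d → ℝ, Dext2 a x → (∃ i, x i = 0) → Q x = 0) ∧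
       (∀ (i : Fin d) (t : ℝ), Dext2 a (fun j => if j = i then t else 1) →
          Q (fun j => if j = i then t else 1) = t) ∧
       (∀ (i : Fin d) (u v : Fin d → ℝ), Dext2 a u → Dext2 a v →
          (∀ j, j ≠ i → u j = v j) → u i ≤ v i → Q u ≤ Q v) ∧
       (∀ u v : Fin d → ℝ, Dext2 a u → Dext2 a v →
          |Q u - Q v| ≤ ∑ i, |u i - v i|))) := by
  have hle : ∀ I k, q I ≤ xI2 a I k := fun I k => (hGH I).2.trans (Hd_le _ k)
  have hwd : ∀ I : Fin d → Bool, (∃ k, xI2 a I k = 0) → q I = 0 := by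
    rintro I ⟨k, hk⟩
    exact le_antisymm (hk ▸ hle I k) (hq01 I).1
  refine ⟨hwd, fun Q hQ hQ0 => ?_⟩
  have hzero : ∀ x : Fin d → ℝ, Dext2 a x → (∃ i, x i = 0) → Q x = 0 := by
    rintro x (⟨I, rfl⟩ | ⟨hx, -⟩) h
    · rw [hQ, hwd I h]
    · exact hQ0 x hx h
  have key : ∀ u v : Fin d → ℝ, Dext2 a u → Dext2 a v →
      Q u - Q v ≤ ∑ i, max (u i - v i) 0 := by
    intro u v hu hv
    have hnn : ∀ i ∈ Finset.univ, 0 ≤ max (u i - v i) 0 := fun i _ => le_max_right _ _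
    rcases hu with ⟨I, rfl⟩ | ⟨hu, hu0⟩
    · rcases hv with ⟨J, rfl⟩ | ⟨hv, k, hk⟩
      · rw [hQ, hQ]
        exact sub_le_sum_posPart hadj I J
      · rw [hQ, hQ0 v hv ⟨k, hk⟩, sub_zero]
        calc q I ≤ xI2 a I k - v k := by rw [hk, sub_zero]; exact hle I k
          _ ≤ max (xI2 a I k - v k) 0 := le_max_left _ _
          _ ≤ _ := Finset.single_le_sum hnn (Finset.mem_univ k)
    · have hQv : 0 ≤ Q v := by
        rcases hv with ⟨J, rfl⟩ | ⟨hv, hv0⟩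
        · rw [hQ]; exact (hq01 J).1
        · rw [hQ0 v hv hv0]
      rw [hQ0 u hu hu0]
      linarith [Finset.sum_nonneg hnn]
  refine ⟨hzero, ?_, ?_, ?_⟩
  · rintro i t (⟨I, hI⟩ | ⟨hx, k, hk⟩)
    · have h := hGH I
      have hi := hle I i
      rw [← hI, Gd_one_except] at h
      rw [← hI] at hi
      rw [hI, hQ]
      exact le_antisymm (by simpa using hi) h.1
    · rw [hQ0 _ hx ⟨k, hk⟩]
      by_cases hki : k = i
      · simpa [hki] using hk.symm
      · simp [hki] at hk
  · intro i u v hu hv hne hi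
    have h0 : ∑ j, max (u j - v j) 0 = 0 := Finset.sum_eq_zero fun j _ => by
      by_cases hj : j = i
      · subst hj; exact max_eq_right (by linarith)
      · simp [hne j hj]
    linarith [key u v hu hv]
  · have hlip : ∀ u v : Fin d → ℝ, Dext2 a u → Dext2 a v → Q u - Q v ≤ ∑ i, |u i - v i| :=
      fun u v hu hv => (key u v hu hv).trans
        (Finset.sum_le_sum fun i _ => max_le (le_abs_self _) (abs_nonneg _))
    intro u v hu hv
    refine abs_sub_le_iff.2 ⟨hlip u v hu hv, ?_⟩
    simpa only [abs_sub_comm] using hlip v u hv hu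

end QC
end

section
/- Fix d ≥ 2. Let a_i, b_i ∈ [0,1] with a_i < b_i for each i = 1,…,d; for I ∈ {0,1,2}^d let x_I ∈ [0,1]^d be the point with (x_I)_k = a_k if I_k = 0, (x_I)_k = b_k if I_k = 1, and (x_I)_k = 1 if I_k = 2; and let q_I ∈ [0,1] for I ∈ {0,1,2}^d satisfy: 0 ≤ q_J − q_I ≤ b_ℓ − a_ℓ for all ℓ and all I ∼_ℓ J with J_ℓ = 1; 0 ≤ q_J − q_I ≤ 1 − b_ℓ for all ℓ and all I ∼_ℓ J with J_ℓ = 2; and G_d(x_I) ≤ q_I ≤ H_d(x_I) for all I ∈ {0,1,2}^d. Let D = Π_{i=1}^d {a_i, b_i, 1}, let L_i = {x ∈ [0,1]^d : x_i = 0}, and let D^ext = D ∪ (⋃_{i=1}^d L_i). Then the function Q : D^ext → ℝ defined by Q(x_I) = q_I for I ∈ {0,1,2}^d and Q(x) = 0 for x ∈ L_i is well defined (i.e., q_I = 0 whenever some coordinate of x_I equals 0) and satisfies on D^ext: Q(x) = 0 whenever some coordinate of x is 0; Q(1,…,1,t,1,…,1) = t for every point of D^ext of this form; Q is nondecreasing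 in each variable; and |Q(u) − Q(v)| ≤ Σ_{i=1}^d |u_i − v_i| for all u, v ∈ D^ext. -/
/-!
`Q` is zero on the faces `L_i`, so the substance is the behaviour of `q` on the grid. On a single
grid line the increments of `q` between any two nodes are nonnegative and bounded by the distance
of the nodes (`line_bound`): add up the two adjacent-node inequalities. Changing the coordinates
one after another gives the `ℓ¹`-Lipschitz bound on the whole grid (`grid_lip`). The bounds
`0 ≤ q_I ≤ H_d(x_I)` make `q` vanish on the faces `x_k = 0` and control the difference between a
grid point and a point of a face; `G_d = H_d` at `(1,…,t,…,1)` gives the other boundary condition.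

Since `b_i = 1` is allowed, a grid point may have several multi-indices, so `line_bound` compares
nodes by their values and not by their indices.
-/

namespace QC

theorem xI3_inCube {d : ℕ} {a b : Fin d → ℝ}
    (ha : ∀ i, a i ∈ Set.Icc (0:ℝ) 1) (hb : ∀ i, b i ∈ Set.Icc (0:ℝ) 1)
    (I : Fin d → Fin 3) : InCube (xI3 a b I) := by
  intro k
  unfold xI3
  split_ifs
  · exact ha k
  · exact hb k
  · simp

/-- The increment of `q` between two nodes of a grid line in direction `ℓ` lies between `0` and
the distance of the nodes. -/
theorem line_bound {d : ℕ} {a b : Fin d → ℝ}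
    (hb : ∀ i, b i ∈ Set.Icc (0:ℝ) 1) (hab : ∀ i, a i < b i) {q : (Fin d → Fin 3) → ℝ}
    (hadj1 : ∀ (ℓ : Fin d) (I J : Fin d → Fin 3), Adj3 I J ℓ → J ℓ = 1 →
        0 ≤ q J - q I ∧ q J - q I ≤ b ℓ - a ℓ)
    (hadj2 : ∀ (ℓ : Fin d) (I J : Fin d → Fin 3), Adj3 I J ℓ → J ℓ = 2 →
        0 ≤ q J - q I ∧ q J - q I ≤ 1 - b ℓ)
    (ℓ : Fin d) (I J : Fin d → Fin 3) (hIJ : ∀ k, k ≠ ℓ → I k = J k)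
    (hle : xI3 a b I ℓ ≤ xI3 a b J ℓ) :
    0 ≤ q J - q I ∧ q J - q I ≤ xI3 a b J ℓ - xI3 a b I ℓ := by
  have h1 := hadj1 ℓ (Function.update I ℓ 0) (Function.update I ℓ 1)
    ⟨by simp, fun k hk => by simp [hk]⟩ (by simp)
  have h2 := hadj2 ℓ (Function.update I ℓ 1) (Function.update I ℓ 2)
    ⟨by simp, fun k hk => by simp [hk]⟩ (by simp)
  have hI : I = Function.update I ℓ (I ℓ) := by simp
  have hJ : J = Function.update I ℓ (J ℓ) := by
    ext k
    by_cases hk : k = ℓ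
    · subst hk; simp
    · simp [hk, hIJ k hk]
  have hqI : q I = q (Function.update I ℓ (I ℓ)) := by rw [← hI]
  have hqJ : q J = q (Function.update I ℓ (J ℓ)) := by rw [← hJ]
  have hl := hab ℓ
  have hbl := (hb ℓ).2
  rw [hqI, hqJ]
  unfold xI3 at hle ⊢
  generalize I ℓ = s at hle ⊢
  generalize J ℓ = t at hle ⊢
  fin_cases s <;> fin_cases t <;> simp at hle ⊢ <;>
    first | linarith | (constructor <;> linarith)

theorem grid_lip {d : ℕ} {a b : Fin d → ℝ}
    (hb : ∀ i, b i ∈ Set.Icc (0:ℝ) 1) (hab : ∀ i, a i < b i) {q : (Fin d → Fin 3) → ℝ}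
    (hadj1 : ∀ (ℓ : Fin d) (I J : Fin d → Fin 3), Adj3 I J ℓ → J ℓ = 1 →
        0 ≤ q J - q I ∧ q J - q I ≤ b ℓ - a ℓ)
    (hadj2 : ∀ (ℓ : Fin d) (I J : Fin d → Fin 3), Adj3 I J ℓ → J ℓ = 2 →
        0 ≤ q J - q I ∧ q J - q I ≤ 1 - b ℓ)
    (I J : Fin d → Fin 3) :
    |q I - q J| ≤ ∑ i, |xI3 a b I i - xI3 a b J i| := by
  have key : ∀ S : Finset (Fin d),
      |q I - q (S.piecewise J I)| ≤ ∑ i ∈ S, |xI3 a b I i - xI3 a b J i| := by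
    intro S
    induction S using Finset.induction_on with
    | empty => simp
    | insert ℓ S hℓ ih =>
      rw [Finset.sum_insert hℓ]
      set K := S.piecewise J I with hK
      set K' := (insert ℓ S).piecewise J I with hK'
      have hKK' : ∀ k, k ≠ ℓ → K k = K' k := by
        intro k hk
        simp [hK, hK', Finset.piecewise, hk]
      have e1 : xI3 a b K ℓ = xI3 a b I ℓ := by simp [xI3, hK, hℓ]
      have e2 : xI3 a b K' ℓ = xI3 a b J ℓ := by simp [xI3, hK']
      have step : |q K - q K'| ≤ |xI3 a b I ℓ - xI3 a b J ℓ| := by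
        rw [← e1, ← e2]
        rcases le_total (xI3 a b K ℓ) (xI3 a b K' ℓ) with h | h
        · have := line_bound hb hab hadj1 hadj2 ℓ K K' hKK' h
          rw [abs_sub_comm, abs_of_nonneg this.1, abs_sub_comm, abs_of_nonneg (by linarith)]
          exact this.2
        · have := line_bound hb hab hadj1 hadj2 ℓ K' K (fun k hk => (hKK' k hk).symm) h
          rw [abs_of_nonneg this.1, abs_of_nonneg (by linarith)]
          exact this.2
      linarith [abs_sub_le (q I) (q K) (q K')]
  simpa using key Finset.univ

/-- the function defined by `q` on the grid `Π {a_i, b_i, 1}` and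
by `0` on the faces `L_i = {x : x_i = 0}` is well defined and satisfies the
boundary, monotonicity and Lipschitz conditions on `D^ext`. -/
theorem extension_three_grid
    (d : ℕ) (hd : 2 ≤ d) (a b : Fin d → ℝ)
    (ha : ∀ i, a i ∈ Set.Icc (0:ℝ) 1) (hb : ∀ i, b i ∈ Set.Icc (0:ℝ) 1)
    (hab : ∀ i, a i < b i)
    (q : (Fin d → Fin 3) → ℝ) (hq01 : ∀ I, q I ∈ Set.Icc (0:ℝ) 1)
    (hadj1 : ∀ (ℓ : Fin d) (I J : Fin d → Fin 3), Adj3 I J ℓ → J ℓ = 1 →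
        0 ≤ q J - q I ∧ q J - q I ≤ b ℓ - a ℓ)
    (hadj2 : ∀ (ℓ : Fin d) (I J : Fin d → Fin 3), Adj3 I J ℓ → J ℓ = 2 →
        0 ≤ q J - q I ∧ q J - q I ≤ 1 - b ℓ)
    (hGH : ∀ I, Gd (xI3 a b I) ≤ q I ∧ q I ≤ Hd (xI3 a b I)) :
    (∀ I : Fin d → Fin 3, (∃ k, xI3 a b I k = 0) → q I = 0) ∧
    (∀ Q : (Fin d → ℝ) → ℝ,
      (∀ I : Fin d → Fin 3, Q (xI3 a b I) = q I) →
      (∀ x : Fin d → ℝ, InCube x → (∃ i, x i = 0) → Q x = 0) →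
      ((∀ x : Fin d → ℝ, Dext3 a b x → (∃ i, x i = 0) → Q x = 0) ∧
       (∀ (i : Fin d) (t : ℝ), Dext3 a b (fun j => if j = i then t else 1) →
          Q (fun j => if j = i then t else 1) = t) ∧
       (∀ (i : Fin d) (u v : Fin d → ℝ), Dext3 a b u → Dext3 a b v →
          (∀ j, j ≠ i → u j = v j) → u i ≤ v i → Q u ≤ Q v) ∧
       (∀ u v : Fin d → ℝ, Dext3 a b u → Dext3 a b v →
          |Q u - Q v| ≤ ∑ i, |u i - v i|))) := by
  have hcube := xI3_inCube ha hb
  have hqle : ∀ I k, q I ≤ xI3 a b I k := fun I k => (hGH I).2.trans (Hd_le _ k)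
  refine ⟨fun I ⟨k, hk⟩ => le_antisymm (hk ▸ hqle I k) (hq01 I).1, ?_⟩
  intro Q hQ hQ0
  have hDcube : ∀ x, Dext3 a b x → InCube x := by
    rintro x (⟨I, rfl⟩ | ⟨hx, -⟩)
    · exact hcube I
    · exact hx
  have hQnn : ∀ x, Dext3 a b x → 0 ≤ Q x := by
    rintro x (⟨I, rfl⟩ | ⟨hx, h0⟩)
    · rw [hQ]; exact (hq01 I).1
    · rw [hQ0 x hx h0]
  have hQle : ∀ x, Dext3 a b x → ∀ k, Q x ≤ x k := by
    rintro x (⟨I, rfl⟩ | ⟨hx, h0⟩) k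
    · rw [hQ]; exact hqle I k
    · rw [hQ0 x hx h0]; exact (hx k).1
  refine ⟨fun x hx h0 => hQ0 x (hDcube x hx) h0, ?_, ?_, ?_⟩
  · intro i t hD
    have hup := hQle _ hD i
    simp only [if_true] at hup
    refine le_antisymm hup ?_
    rcases hD with ⟨I, hI⟩ | ⟨hx, k, hk⟩
    · rw [hI, hQ]
      refine le_trans (le_of_eq ?_) (hGH I).1
      rw [← hI]
      have hsum : ∑ j, (if j = i then t else (1:ℝ)) = t - 1 + d := by
        have : ∀ j, (if j = i then t else (1:ℝ)) = (if j = i then t - 1 else 0) + 1 := by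
          intro j; split_ifs <;> ring
        simp [this, Finset.sum_add_distrib]
      simp only [Gd, hsum]
      ring
    · rw [hQ0 _ hx ⟨k, hk⟩]
      -- the vanishing coordinate can only be the `i`-th one
      by_cases h : k = i
      · simp only [h, if_true] at hk
        exact hk.le
      · simp [h] at hk
  · intro i u v hu hv huv hi
    rcases hu with ⟨I, rfl⟩ | ⟨hx, h0⟩
    · rcases hv with ⟨J, rfl⟩ | ⟨hx, k, hk⟩
      · -- `I` and `J` may differ off `i`, so `J` is replaced by another index of the same point
        have hJ : xI3 a b J = xI3 a b (Function.update I i (J i)) := by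
          ext k
          by_cases h : k = i
          · subst h; simp [xI3]
          · rw [← huv k h]; simp [xI3, h]
        rw [hJ] at hi ⊢
        rw [hQ, hQ]
        have := line_bound hb hab hadj1 hadj2 i I (Function.update I i (J i))
          (fun k hk => by simp [hk]) hi
        linarith [this.1]
      · have hle : xI3 a b I k ≤ v k := by
          by_cases h : k = i
          · subst h; exact hi
          · exact (huv k h).le
        rw [hQ0 v hx ⟨k, hk⟩, hQ]
        linarith [hqle I k]
    · rw [hQ0 u hx h0]
      exact hQnn v hv
  · have hface : ∀ u v, Dext3 a b u → InCube v → (∃ k, v k = 0) →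
        |Q u - Q v| ≤ ∑ i, |u i - v i| := by
      rintro u v hu hv ⟨k, hk⟩
      rw [hQ0 v hv ⟨k, hk⟩, sub_zero, abs_of_nonneg (hQnn u hu)]
      have h1 : |u k - v k| ≤ ∑ i, |u i - v i| :=
        Finset.single_le_sum (f := fun i => |u i - v i|) (fun i _ => abs_nonneg _)
          (Finset.mem_univ k)
      have h2 := le_abs_self (u k - v k)
      have h3 := hQle u hu k
      linarith
    intro u v hu hv
    rcases hv with ⟨J, rfl⟩ | ⟨hx, h0⟩
    · rcases hu with ⟨I, rfl⟩ | ⟨hx, h0⟩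
      · rw [hQ, hQ]
        exact grid_lip hb hab hadj1 hadj2 I J
      · have := hface _ u (Or.inl ⟨J, rfl⟩) hx h0
        simpa only [abs_sub_comm] using this
    · exact hface u v hu hx h0


end QC
end

section
/- Fix d ≥ 2. Let a_1, …, a_d ∈ [0,1), for I ∈ {0,1}^d let x_I ∈ [0,1]^d be the point with (x_I)_k = a_k if I_k = 0 and (x_I)_k = 1 if I_k = 1, and let q_I ∈ [0,1] for I ∈ {0,1}^d satisfy: 0 ≤ q_J − q_I ≤ 1 − a_ℓ for all ℓ = 1,…,d and all I ∼_ℓ J, and G_d(x_I) ≤ q_I ≤ H_d(x_I) for all I ∈ {0,1}^d. Then there exists a d-quasi-copula Q : [0,1]^d → [0,1] such that Q(x_I) = q_I for all I ∈ {0,1}^d. -/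
/-!
The extension is the asymmetric McShane envelope of the data. A function is nondecreasing and
`1`-Lipschitz for the `ℓ¹` distance as soon as `Q v ≤ Q u + ∑ k, (v k - u k)⁺` for all `u, v`, and
this one-sided bound passes to finite infima. It holds for each coordinate `u ↦ u i` and for each
`u ↦ q I + ∑ k, (u k - x_I k)⁺`; `envelope` is the minimum of all of these.

The coordinates force `Q = 0` on the lower faces and `Q ≤ t` at a point with one coordinate `t` and
the others `1`; the lower bound `G_d(x_I) ≤ q I` gives `Q ≥ t` there. At a grid point `x_J` the
term `I = J` gives `Q ≤ q J`, while `q J ≤ H_d(x_J)` and `grid_le`, which sums the edge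
conditions along a path from `I` to `J`, give `Q ≥ q J`.
-/

namespace QC

/-- The functions whose minimum is the extension: the coordinates `u ↦ u i`, which carry the upper
bound `H_d`, and for each grid index `I` the largest function allowed by the value `q I` at `x_I`
together with monotonicity and the Lipschitz condition. -/
def piece {d : ℕ} (a : Fin d → ℝ) (q : (Fin d → Bool) → ℝ) :
    Fin d ⊕ (Fin d → Bool) → (Fin d → ℝ) → ℝ
  | Sum.inl i, u => u i
  | Sum.inr I, u => q I + ∑ k, max (u k - xI2 a I k) 0

/-- The minimum of the finitely many functions `piece a q s`. -/
noncomputable def envelope {d : ℕ} (a : Fin d → ℝ) (q : (Fin d → Bool) → ℝ)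
    (u : Fin d → ℝ) : ℝ := ⨅ s, piece a q s u

lemma envelope_le {d : ℕ} (a : Fin d → ℝ) (q : (Fin d → Bool) → ℝ) (u : Fin d → ℝ)
    (s : Fin d ⊕ (Fin d → Bool)) : envelope a q u ≤ piece a q s u :=
  ciInf_le (Set.finite_range _).bddBelow s

lemma le_envelope {d : ℕ} {a : Fin d → ℝ} {q : (Fin d → Bool) → ℝ} {u : Fin d → ℝ} {c : ℝ}
    (h₁ : ∀ i, c ≤ u i) (h₂ : ∀ I, c ≤ q I + ∑ k, max (u k - xI2 a I k) 0) :
    c ≤ envelope a q u := by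
  refine le_ciInf fun s => ?_
  cases s with
  | inl i => exact h₁ i
  | inr I => exact h₂ I

lemma piece_le_add {d : ℕ} (a : Fin d → ℝ) (q : (Fin d → Bool) → ℝ)
    (s : Fin d ⊕ (Fin d → Bool)) (u v : Fin d → ℝ) :
    piece a q s v ≤ piece a q s u + ∑ k, max (v k - u k) 0 := by
  cases s with
  | inl i =>
    have h : max (v i - u i) 0 ≤ ∑ k, max (v k - u k) 0 :=
      Finset.single_le_sum (f := fun k => max (v k - u k) 0)
        (fun k _ => le_max_right _ _) (Finset.mem_univ i)
    have h' := le_max_left (v i - u i) 0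
    simp only [piece]
    linarith
  | inr I =>
    simp only [piece]
    rw [add_assoc, ← Finset.sum_add_distrib]
    gcongr with k
    refine max_le ?_ (add_nonneg (le_max_right _ _) (le_max_right _ _))
    linarith [le_max_left (u k - xI2 a I k) 0, le_max_left (v k - u k) 0]

/-- The one-sided estimate that contains both monotonicity and the Lipschitz condition. -/
lemma envelope_le_add {d : ℕ} (a : Fin d → ℝ) (q : (Fin d → Bool) → ℝ) (u v : Fin d → ℝ) :
    envelope a q v ≤ envelope a q u + ∑ k, max (v k - u k) 0 := by
  rw [← sub_le_iff_le_add]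
  refine le_ciInf fun s => ?_
  rw [sub_le_iff_le_add]
  exact (envelope_le a q v s).trans (piece_le_add a q s u v)

/-- Summing the edge conditions along a path that changes the coordinates in `s` one at a time. -/
lemma grid_le_of_eq_off {d : ℕ} {a : Fin d → ℝ} {q : (Fin d → Bool) → ℝ}
    (hadj : ∀ (ℓ : Fin d) (I J : Fin d → Bool), Adj2 I J ℓ →
        0 ≤ q J - q I ∧ q J - q I ≤ 1 - a ℓ) (I : Fin d → Bool) (s : Finset (Fin d)) :
    ∀ J : Fin d → Bool, (∀ k, k ∉ s → J k = I k) →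
      q J ≤ q I + ∑ k ∈ s, max (xI2 a J k - xI2 a I k) 0 := by
  induction s using Finset.induction_on with
  | empty =>
    intro J h
    obtain rfl : J = I := funext fun k => h k (by simp)
    simp
  | insert ℓ s hℓ ih =>
    intro J h
    have h₁ := ih (Function.update J ℓ (I ℓ)) (by
      intro k hk
      by_cases hkl : k = ℓ
      · subst hkl; simp
      · rw [Function.update_of_ne hkl]
        exact h k (by simp [hkl, hk]))
    have h₂ : ∑ k ∈ s, max (xI2 a (Function.update J ℓ (I ℓ)) k - xI2 a I k) 0
        = ∑ k ∈ s, max (xI2 a J k - xI2 a I k) 0 := by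
      refine Finset.sum_congr rfl fun k hk => ?_
      have hkl : k ≠ ℓ := fun e => hℓ (e ▸ hk)
      simp [xI2, Function.update_of_ne hkl]
    rw [h₂] at h₁
    rw [Finset.sum_insert hℓ]
    have h₃ : q J ≤ q (Function.update J ℓ (I ℓ)) + max (xI2 a J ℓ - xI2 a I ℓ) 0 := by
      have hpos := le_max_right (xI2 a J ℓ - xI2 a I ℓ) 0
      by_cases he : J ℓ = I ℓ
      · rw [← he, Function.update_eq_self]
        linarith
      · cases hJ : J ℓ with
        | true =>
          have hI : I ℓ = false := by simpa [hJ] using he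
          have := (hadj ℓ (Function.update J ℓ (I ℓ)) J
            ⟨by simp [hI], hJ, fun k hk => Function.update_of_ne hk _ _⟩).2
          have hmax : 1 - a ℓ ≤ max (xI2 a J ℓ - xI2 a I ℓ) 0 := by
            simp [xI2, hJ, hI]
          linarith
        | false =>
          have hI : I ℓ = true := by simpa [hJ] using he
          have := (hadj ℓ J (Function.update J ℓ (I ℓ))
            ⟨hJ, by simp [hI], fun k hk => (Function.update_of_ne hk _ _).symm⟩).1
          linarith
    linarith

lemma grid_le {d : ℕ} {a : Fin d → ℝ} {q : (Fin d → Bool) → ℝ}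
    (hadj : ∀ (ℓ : Fin d) (I J : Fin d → Bool), Adj2 I J ℓ →
        0 ≤ q J - q I ∧ q J - q I ≤ 1 - a ℓ) (I J : Fin d → Bool) :
    q J ≤ q I + ∑ k, max (xI2 a J k - xI2 a I k) 0 :=
  grid_le_of_eq_off hadj I Finset.univ J (by simp)

/-- Theorem `main`: data `q` on the grid `Π {a_i, 1}` satisfying
the grid conditions extends to a `d`-quasi-copula. -/
theorem exists_quasiCopula_extending_two_grid
    (d : ℕ) (hd : 2 ≤ d) (a : Fin d → ℝ)
    (ha : ∀ i, a i ∈ Set.Ico (0:ℝ) 1)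
    (q : (Fin d → Bool) → ℝ) (hq01 : ∀ I, q I ∈ Set.Icc (0:ℝ) 1)
    (hadj : ∀ (ℓ : Fin d) (I J : Fin d → Bool), Adj2 I J ℓ →
        0 ≤ q J - q I ∧ q J - q I ≤ 1 - a ℓ)
    (hGH : ∀ I, Gd (xI2 a I) ≤ q I ∧ q I ≤ Hd (xI2 a I)) :
    ∃ Q : (Fin d → ℝ) → ℝ, IsQuasiCopula d Q ∧
      ∀ I : Fin d → Bool, Q (xI2 a I) = q I := by
  have hnn : ∀ u, InCube u → 0 ≤ envelope a q u := fun u hu =>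
    le_envelope (fun i => (hu i).1) fun I =>
      add_nonneg (hq01 I).1 (Finset.sum_nonneg fun k _ => le_max_right _ _)
  refine ⟨envelope a q, ⟨?_, ?_, ?_, ?_, ?_⟩, ?_⟩
  · intro u hu
    let i : Fin d := ⟨0, by omega⟩
    exact ⟨hnn u hu, (envelope_le a q u (Sum.inl i)).trans (hu i).2⟩
  · rintro u hu ⟨i, hi⟩
    exact le_antisymm ((envelope_le a q u (Sum.inl i)).trans_eq hi) (hnn u hu)
  · intro i t ht
    refine le_antisymm ((envelope_le a q _ (Sum.inl i)).trans_eq (if_pos rfl))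
      (le_envelope (fun j => ?_) fun I => ?_)
    · split_ifs
      · exact le_rfl
      · exact ht.2
    · -- Dropping the positive parts leaves `G_d(x_I) + ∑ k, (u k - x_I k) = t`.
      have h₁ : ∑ k, ((if k = i then t else 1) - xI2 a I k)
          ≤ ∑ k, max ((if k = i then t else 1) - xI2 a I k) 0 :=
        Finset.sum_le_sum fun k _ => le_max_left _ _
      have h₂ : ∑ k : Fin d, (if k = i then t else (1 : ℝ)) = t - 1 + d := by
        have : ∀ k : Fin d, (if k = i then t else (1 : ℝ)) = (if k = i then t - 1 else 0) + 1 := by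
          intro k
          split_ifs <;> ring
        simp [this, Finset.sum_add_distrib]
      have h₃ := (hGH I).1
      rw [Finset.sum_sub_distrib, h₂] at h₁
      unfold Gd at h₃
      linarith
  · intro i u v _ _ hne hle
    have h := envelope_le_add a q v u
    have h0 : ∑ k, max (u k - v k) 0 = 0 := by
      refine Finset.sum_eq_zero fun k _ => max_eq_right ?_
      by_cases hk : k = i
      · subst hk; linarith
      · rw [hne k hk, sub_self]
    linarith
  · intro u v _ _
    have h₁ := envelope_le_add a q u v
    have h₂ := envelope_le_add a q v u
    have h₃ : ∑ k, max (v k - u k) 0 ≤ ∑ k, |u k - v k| :=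
      Finset.sum_le_sum fun k _ => max_le (by rw [abs_sub_comm]; exact le_abs_self _) (abs_nonneg _)
    have h₄ : ∑ k, max (u k - v k) 0 ≤ ∑ k, |u k - v k| :=
      Finset.sum_le_sum fun k _ => max_le (le_abs_self _) (abs_nonneg _)
    rw [abs_le]
    constructor <;> linarith
  · intro J
    refine le_antisymm ((envelope_le a q _ (Sum.inr J)).trans_eq (by simp [piece]))
      (le_envelope (fun i => ?_) fun I => grid_le hadj I J)
    exact (hGH J).2.trans (ciInf_le (Set.finite_range _).bddBelow i)

end QC
end

section
/- Fix d ≥ 2. Let a_i, b_i ∈ [0,1] with a_i < b_i for each i = 1,…,d; for I ∈ {0,1,2}^d let x_I ∈ [0,1]^d be the point with (x_I)_k = a_k if I_k = 0, (x_I)_k = b_k if I_k = 1, and (x_I)_k = 1 if I_k = 2; and let q_I ∈ [0,1] for I ∈ {0,1,2}^d satisfy: 0 ≤ q_J − q_I ≤ b_ℓ − a_ℓ for all ℓ and all I ∼_ℓ J with J_ℓ = 1; 0 ≤ q_J − q_I ≤ 1 − b_ℓ for all ℓ and all I ∼_ℓ J with J_ℓ = 2; and G_d(x_I) ≤ q_I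 ≤ H_d(x_I) for all I ∈ {0,1,2}^d. Then there exists a d-quasi-copula Q : [0,1]^d → [0,1] such that Q(x_I) = q_I for all I ∈ {0,1,2}^d. -/
/-!
The extension is of McShane type. Write `x_I` for the grid points and let
`Q u = max {0, G u, max_I (q_I - ∑ i, (x_I i - u i)⁺)}`.
Every function in this maximum is nondecreasing in each variable and `1`-Lipschitz for the
`ℓ¹` distance, and every one is bounded above by each coordinate `u i` on the cube (for the last
family because `q_I ≤ x_I i`). Hence `Q` is monotone and Lipschitz with `max 0 G ≤ Q ≤ H`, and
these two bounds force the boundary conditions.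

That `Q` interpolates the data amounts to `q_I - q_J ≤ ∑ i, (x_I i - x_J i)⁺` for all `I, J`
(`grid_sub_le`), which is obtained by changing the multi-index one coordinate at a time: one such
change is at most two of the given neighbour steps (`grid_update_sub_le`).
-/

namespace QC

open Finset

section

variable {d : ℕ} {a b : Fin d → ℝ} {q : (Fin d → Fin 3) → ℝ}

theorem grid_update_sub_le
    (hadj1 : ∀ (ℓ : Fin d) (I J : Fin d → Fin 3), Adj3 I J ℓ → J ℓ = 1 →
        0 ≤ q J - q I ∧ q J - q I ≤ b ℓ - a ℓ)
    (hadj2 : ∀ (ℓ : Fin d) (I J : Fin d → Fin 3), Adj3 I J ℓ → J ℓ = 2 →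
        0 ≤ q J - q I ∧ q J - q I ≤ 1 - b ℓ)
    (I J : Fin d → Fin 3) (ℓ : Fin d) :
    q (Function.update J ℓ (I ℓ)) - q J ≤ max (xI3 a b I ℓ - xI3 a b J ℓ) 0 := by
  have h1 := hadj1 ℓ (Function.update J ℓ 0) (Function.update J ℓ 1)
    ⟨by simp, fun k hk => by simp [hk]⟩ (by simp)
  have h2 := hadj2 ℓ (Function.update J ℓ 1) (Function.update J ℓ 2)
    ⟨by simp, fun k hk => by simp [hk]⟩ (by simp)
  have key : ∀ c e : Fin 3, q (Function.update J ℓ c) - q (Function.update J ℓ e) ≤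
      max ((if c = 0 then a ℓ else if c = 1 then b ℓ else 1)
        - (if e = 0 then a ℓ else if e = 1 then b ℓ else 1)) 0 := by
    intro c e
    rw [le_max_iff]
    fin_cases c <;> fin_cases e <;> simp <;> grind
  simpa [xI3] using key (I ℓ) (J ℓ)

/-- The grid data satisfy the one-sided `ℓ¹`-Lipschitz bound between any two grid points, not
only between neighbours. -/
theorem grid_sub_le
    (hadj1 : ∀ (ℓ : Fin d) (I J : Fin d → Fin 3), Adj3 I J ℓ → J ℓ = 1 →
        0 ≤ q J - q I ∧ q J - q I ≤ b ℓ - a ℓ)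
    (hadj2 : ∀ (ℓ : Fin d) (I J : Fin d → Fin 3), Adj3 I J ℓ → J ℓ = 2 →
        0 ≤ q J - q I ∧ q J - q I ≤ 1 - b ℓ)
    (I J : Fin d → Fin 3) :
    q I - q J ≤ ∑ i, max (xI3 a b I i - xI3 a b J i) 0 := by
  have h : ∀ s : Finset (Fin d),
      q (s.piecewise I J) - q J ≤ ∑ i ∈ s, max (xI3 a b I i - xI3 a b J i) 0 := by
    intro s
    induction s using Finset.induction_on with
    | empty => simp
    | insert j s hj ih =>
      rw [Finset.piecewise_insert, Finset.sum_insert hj]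
      have := grid_update_sub_le hadj1 hadj2 I (s.piecewise I J) j
      have e : xI3 a b (s.piecewise I J) j = xI3 a b J j := by simp [xI3, hj]
      rw [e] at this
      linarith
  simpa using h univ

/-- The lower bound forced by the value `q I` at `xI3 a b I`: it is the smallest nondecreasing,
`ℓ¹`-Lipschitz function taking that value there. -/
def cone (a b : Fin d → ℝ) (q : (Fin d → Fin 3) → ℝ) (I : Fin d → Fin 3) (u : Fin d → ℝ) : ℝ :=
  q I - ∑ i, max (xI3 a b I i - u i) 0

/-- The extension of the grid data: the pointwise maximum of `0`, `Gd` and the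
cones at all grid points. -/
noncomputable def ext (a b : Fin d → ℝ) (q : (Fin d → Fin 3) → ℝ) (u : Fin d → ℝ) : ℝ :=
  max (max 0 (Gd u)) (univ.sup' univ_nonempty fun I => cone a b q I u)

theorem ext_le_iff {u : Fin d → ℝ} {c : ℝ} :
    ext a b q u ≤ c ↔ 0 ≤ c ∧ Gd u ≤ c ∧ ∀ I, cone a b q I u ≤ c := by
  simp [ext, and_assoc]

theorem ext_bounds (u : Fin d → ℝ) :
    0 ≤ ext a b q u ∧ Gd u ≤ ext a b q u ∧ ∀ I, cone a b q I u ≤ ext a b q u :=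
  ext_le_iff.1 le_rfl

/-- Monotonicity and the Lipschitz condition in one inequality. -/
theorem ext_le_add (u v : Fin d → ℝ) :
    ext a b q u ≤ ext a b q v + ∑ i, max (u i - v i) 0 := by
  obtain ⟨h0, hG, hC⟩ := ext_bounds (a := a) (b := b) (q := q) v
  refine ext_le_iff.2 ⟨?_, ?_, fun I => ?_⟩
  · have : 0 ≤ ∑ i, max (u i - v i) 0 := sum_nonneg fun i _ => le_max_right _ _
    linarith
  · have : ∑ i, u i ≤ ∑ i, (v i + max (u i - v i) 0) :=
      sum_le_sum fun i _ => by linarith [le_max_left (u i - v i) 0]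
    rw [sum_add_distrib] at this
    unfold Gd at *
    linarith
  · have : ∑ i, max (xI3 a b I i - v i) 0 ≤
        ∑ i, (max (xI3 a b I i - u i) 0 + max (u i - v i) 0) :=
      sum_le_sum fun i _ => max_le
        (by linarith [le_max_left (u i - v i) 0, le_max_left (xI3 a b I i - u i) 0])
        (add_nonneg (le_max_right _ _) (le_max_right _ _))
    rw [sum_add_distrib] at this
    have hI := hC I
    unfold cone at *
    linarith

theorem Gd_le_coord {u : Fin d → ℝ} (hu : InCube u) (i : Fin d) : Gd u ≤ u i := by
  have h : ∑ j, (u j - 1) ≤ u i - 1 := by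
    rw [← add_sum_erase _ _ (mem_univ i)]
    have : ∑ j ∈ univ.erase i, (u j - 1) ≤ 0 := sum_nonpos fun j _ => by linarith [(hu j).2]
    linarith
  simp only [sum_sub_distrib, sum_const, card_univ, Fintype.card_fin, nsmul_eq_mul,
    mul_one] at h
  unfold Gd
  linarith

theorem ext_le_coord (hqH : ∀ I, q I ≤ Hd (xI3 a b I)) {u : Fin d → ℝ} (hu : InCube u)
    (i : Fin d) : ext a b q u ≤ u i := by
  refine ext_le_iff.2 ⟨(hu i).1, Gd_le_coord hu i, fun I => ?_⟩
  have h1 : q I ≤ xI3 a b I i := (hqH I).trans (ciInf_le (Set.finite_range _).bddBelow i)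
  have h2 : max (xI3 a b I i - u i) 0 ≤ ∑ j, max (xI3 a b I j - u j) 0 :=
    single_le_sum (f := fun j => max (xI3 a b I j - u j) 0)
      (fun j _ => le_max_right _ _) (mem_univ i)
  have h3 := le_max_left (xI3 a b I i - u i) 0
  unfold cone
  linarith

end

/-- Theorem `main-v2`: data `q` on the grid `Π {a_i, b_i, 1}`
satisfying the grid conditions extends to a `d`-quasi-copula. -/
theorem exists_quasiCopula_extending_three_grid
    (d : ℕ) (hd : 2 ≤ d) (a b : Fin d → ℝ)
    (ha : ∀ i, a i ∈ Set.Icc (0:ℝ) 1) (hb : ∀ i, b i ∈ Set.Icc (0:ℝ) 1)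
    (hab : ∀ i, a i < b i)
    (q : (Fin d → Fin 3) → ℝ) (hq01 : ∀ I, q I ∈ Set.Icc (0:ℝ) 1)
    (hadj1 : ∀ (ℓ : Fin d) (I J : Fin d → Fin 3), Adj3 I J ℓ → J ℓ = 1 →
        0 ≤ q J - q I ∧ q J - q I ≤ b ℓ - a ℓ)
    (hadj2 : ∀ (ℓ : Fin d) (I J : Fin d → Fin 3), Adj3 I J ℓ → J ℓ = 2 →
        0 ≤ q J - q I ∧ q J - q I ≤ 1 - b ℓ)
    (hGH : ∀ I, Gd (xI3 a b I) ≤ q I ∧ q I ≤ Hd (xI3 a b I)) :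
    ∃ Q : (Fin d → ℝ) → ℝ, IsQuasiCopula d Q ∧
      ∀ I : Fin d → Fin 3, Q (xI3 a b I) = q I := by
  have hH := fun I => (hGH I).2
  refine ⟨ext a b q, ⟨fun u hu => ?_, fun u hu ⟨i, hi⟩ => ?_, fun i t ht => ?_,
    fun i u v _ _ hne hi => ?_, fun u v _ _ => ?_⟩, fun I => ?_⟩
  · exact ⟨(ext_bounds u).1, (ext_le_coord hH hu ⟨0, by omega⟩).trans (hu _).2⟩
  · exact le_antisymm (hi ▸ ext_le_coord hH hu i) (ext_bounds u).1
  · have hc : InCube (fun j => if j = i then t else 1) := by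
      intro j
      by_cases h : j = i <;> simp [h, ht.1, ht.2]
    refine le_antisymm (by simpa using ext_le_coord hH hc i) ?_
    have hG := (ext_bounds (a := a) (b := b) (q := q) (fun j => if j = i then t else 1)).2.1
    have hs : ∑ j, (if j = i then t else 1) = (d : ℝ) - 1 + t := by
      have : ∀ j, (if j = i then t else 1) = 1 + (if j = i then t - 1 else 0) := by
        intro j; split_ifs <;> ring
      simp only [this, sum_add_distrib, sum_ite_eq', mem_univ, if_true, sum_const, card_univ,
        Fintype.card_fin, nsmul_eq_mul]
      ring
    unfold Gd at hG
    rw [hs] at hG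
    linarith
  · have h := ext_le_add (a := a) (b := b) (q := q) u v
    rw [sum_eq_zero fun j _ => ?_] at h
    · linarith
    · rcases eq_or_ne j i with rfl | hj
      · exact max_eq_right (by linarith)
      · simp [hne j hj]
  · have key : ∀ u v : Fin d → ℝ, ext a b q u ≤ ext a b q v + ∑ i, |u i - v i| := fun u v =>
      (ext_le_add u v).trans (add_le_add_right
        (sum_le_sum fun i _ => max_le (le_abs_self _) (abs_nonneg _)) _)
    have h1 := key u v
    have h2 := key v u
    simp only [fun i => abs_sub_comm (v i) (u i)] at h2
    exact abs_sub_le_iff.2 ⟨by linarith, by linarith⟩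
  · refine le_antisymm (ext_le_iff.2 ⟨(hq01 I).1, (hGH I).1, fun J => ?_⟩) ?_
    · have := grid_sub_le hadj1 hadj2 J I
      unfold cone
      linarith
    · simpa [cone] using (ext_bounds (a := a) (b := b) (q := q) (xI3 a b I)).2.2 I

end QC
end

section
/- There exists a 5-quasi-copula Q : [0,1]^5 → [0,1] such that the Q-volume of the box B = [8/13, 12/13]^5 equals −32/13; explicitly, one may take Q with vertex values depending only on the number ‖I‖₁ of coordinates of the vertex equal to 12/13, namely Q(x_I) = 0 for ‖I‖₁ ∈ {0,1}, Q(x_I) = 4/13 for ‖I‖₁ ∈ {2,3}, and Q(x_I) = 8/13 for ‖I‖₁ ∈ {4,5}. -/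
/-! The quasi-copula is a McShane-type lower extension of prescribed values. Given finitely many
points `x j` with values `q j`, put `Q u = max 0 (max_j (q j - ∑ k, (x j k - u k)⁺))`
(`lowerExt`). Each term is nondecreasing and `1`-Lipschitz for `ℓ¹`, hence so is `Q`; both facts
are contained in the one-sided estimate `Q u ≤ Q v + ∑ k, (u k - v k)⁺` (`lowerExt_le_add`).
If `q j ≤ x j i` for all `i`, then `Q u ≤ u i` for all `i` (`lowerExt_le_coord`), which gives
the boundary condition at `0` and the upper half of the one at `1`. The lower half follows once
the data contain the point `(1, …, 1)` with value `1`, whose term is `∑ k, u k - d + 1` on the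
cube.

The value `q j₀` is attained at `x j₀` as soon as the data satisfy
`q j ≤ q j₀ + ∑ k, (x j k - x j₀ k)⁺` (`lowerExt_eq`). For the vertices of `[8/13, 12/13]^5`
this says that the layer values `0, 0, 4/13, 4/13, 8/13, 8/13` grow by at most `4/13` per
coordinate raised from `8/13` to `12/13`. -/

namespace QC

/-- The smallest nonnegative function that is nondecreasing, `1`-Lipschitz for the `ℓ¹` distance,
and at least `q j` at each of the finitely many points `x j`. -/
noncomputable def lowerExt {ι : Type} [Fintype ι] [Nonempty ι] {d : ℕ}
    (x : ι → Fin d → ℝ) (q : ι → ℝ) (u : Fin d → ℝ) : ℝ :=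
  max 0 (Finset.univ.sup' Finset.univ_nonempty fun j => q j - ∑ k, max 0 (x j k - u k))

section lowerExt

variable {ι : Type} [Fintype ι] [Nonempty ι] {d : ℕ} {x : ι → Fin d → ℝ} {q : ι → ℝ}

lemma lowerExt_nonneg (u : Fin d → ℝ) : 0 ≤ lowerExt x q u := le_max_left _ _

lemma le_lowerExt (u : Fin d → ℝ) (j : ι) :
    q j - ∑ k, max 0 (x j k - u k) ≤ lowerExt x q u :=
  le_max_of_le_right
    (Finset.le_sup' (fun j => q j - ∑ k, max 0 (x j k - u k)) (Finset.mem_univ j))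

lemma lowerExt_le {u : Fin d → ℝ} {c : ℝ} (hc : 0 ≤ c)
    (h : ∀ j, q j - ∑ k, max 0 (x j k - u k) ≤ c) : lowerExt x q u ≤ c :=
  max_le hc (Finset.sup'_le _ _ fun j _ => h j)

/-- One-sided Lipschitz estimate, from which monotonicity and the Lipschitz condition follow. -/
lemma lowerExt_le_add (u v : Fin d → ℝ) :
    lowerExt x q u ≤ lowerExt x q v + ∑ k, max 0 (u k - v k) := by
  refine lowerExt_le
    (add_nonneg (lowerExt_nonneg v) (Finset.sum_nonneg fun k _ => le_max_left _ _)) fun j => ?_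
  have h1 := le_lowerExt (x := x) (q := q) v j
  have h2 : ∑ k, max 0 (x j k - v k) ≤ ∑ k, max 0 (x j k - u k) + ∑ k, max 0 (u k - v k) := by
    rw [← Finset.sum_add_distrib]
    refine Finset.sum_le_sum fun k _ => max_le ?_ ?_
    · exact add_nonneg (le_max_left _ _) (le_max_left _ _)
    · linarith [le_max_right 0 (x j k - u k), le_max_right 0 (u k - v k)]
  linarith

lemma lowerExt_le_coord (hq : ∀ j i, q j ≤ x j i) {u : Fin d → ℝ} (hu : InCube u) (i : Fin d) :
    lowerExt x q u ≤ u i := by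
  refine lowerExt_le (hu i).1 fun j => ?_
  have h := Finset.single_le_sum (f := fun k => max 0 (x j k - u k))
    (fun k _ => le_max_left _ _) (Finset.mem_univ i)
  linarith [hq j i, le_max_right 0 (x j i - u i)]

lemma lowerExt_eq {j₀ : ι} (h0 : 0 ≤ q j₀)
    (h : ∀ j, q j ≤ q j₀ + ∑ k, max 0 (x j k - x j₀ k)) : lowerExt x q (x j₀) = q j₀ := by
  refine le_antisymm (lowerExt_le h0 fun j => by linarith [h j]) ?_
  simpa using le_lowerExt (x := x) (q := q) (x j₀) j₀

/-- Dimension `0` is excluded because there `lowerExt_le_coord` gives no upper bound. -/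
lemma isQuasiCopula_lowerExt (hd : 0 < d) (hq : ∀ j i, q j ≤ x j i)
    {j₁ : ι} (hx : ∀ i, x j₁ i = 1) (hq1 : q j₁ = 1) : IsQuasiCopula d (lowerExt x q) where
  mem u hu := ⟨lowerExt_nonneg u, (lowerExt_le_coord hq hu ⟨0, hd⟩).trans (hu _).2⟩
  bc0 u hu := by
    rintro ⟨i, hi⟩
    exact le_antisymm (hi ▸ lowerExt_le_coord hq hu i) (lowerExt_nonneg u)
  bc1 i t ht := by
    have hu : InCube (fun j => if j = i then t else 1) := by
      intro j
      dsimp only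
      split_ifs
      · exact ht
      · exact ⟨zero_le_one, le_rfl⟩
    refine le_antisymm (by simpa using lowerExt_le_coord hq hu i) ?_
    have h := le_lowerExt (x := x) (q := q) (fun j => if j = i then t else 1) j₁
    rw [Finset.sum_eq_single i (fun k _ hk => by simp [hx, hk]) (by simp), hq1, hx] at h
    simp only [if_true] at h
    rw [max_eq_right (by linarith [ht.2])] at h
    linarith
  mono i u v _ _ hne hi := by
    have h := lowerExt_le_add (x := x) (q := q) u v
    rw [Finset.sum_eq_zero fun k _ => ?_, add_zero] at h
    · exact h
    · by_cases hk : k = i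
      · subst hk; exact max_eq_left (by linarith)
      · simp [hne k hk]
  lip u v _ _ := by
    have key : ∀ u v : Fin d → ℝ, lowerExt x q u - lowerExt x q v ≤ ∑ i, |u i - v i| := by
      intro u v
      have h := lowerExt_le_add (x := x) (q := q) u v
      have h2 : ∑ k, max 0 (u k - v k) ≤ ∑ k, |u k - v k| :=
        Finset.sum_le_sum fun k _ => max_le (abs_nonneg _) (le_abs_self _)
      linarith
    refine abs_sub_le_iff.2 ⟨key u v, ?_⟩
    simpa only [abs_sub_comm] using key v u

end lowerExt

/-- The prescribed value at a vertex with `n` coordinates equal to `12/13`. -/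
noncomputable def layerValue (n : ℕ) : ℝ := if n ≤ 1 then 0 else if n ≤ 3 then 4/13 else 8/13

lemma layerValue_nonneg (n : ℕ) : 0 ≤ layerValue n := by
  unfold layerValue; split_ifs <;> norm_num

lemma layerValue_le (n : ℕ) : layerValue n ≤ 8/13 := by
  unfold layerValue; split_ifs <;> norm_num

lemma layerValue_le_add {a b c : ℕ} (h : a ≤ b + c) :
    layerValue a ≤ layerValue b + 4/13 * c := by
  have hc : (0:ℝ) ≤ c := Nat.cast_nonneg c
  unfold layerValue
  split_ifs <;> first
    | linarith
    | (have : (1:ℝ) ≤ c := by exact_mod_cast (by omega : 1 ≤ c)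
       linarith)
    | (have : (2:ℝ) ≤ c := by exact_mod_cast (by omega : 2 ≤ c)
       linarith)

/-- The vertices of `[8/13, 12/13]^5`, together with the point `(1, …, 1)` as `none`. -/
noncomputable def dataPoint : Option (Fin 5 → Bool) → Fin 5 → ℝ
  | none => fun _ => 1
  | some I => vertex (fun _ => (8:ℝ)/13) (fun _ => (12:ℝ)/13) I

/-- The values prescribed at the points `dataPoint`. -/
noncomputable def dataValue : Option (Fin 5 → Bool) → ℝ
  | none => 1
  | some I => layerValue (normOne I)

lemma dataValue_le (j : Option (Fin 5 → Bool)) (i : Fin 5) : dataValue j ≤ dataPoint j i := by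
  cases j with
  | none => exact le_rfl
  | some I =>
    refine (layerValue_le _).trans ?_
    simp only [dataPoint, vertex]
    split_ifs <;> norm_num

/-- Compatibility of the prescribed values at two vertices. -/
lemma dataValue_some_le (I J : Fin 5 → Bool) :
    dataValue (some I) ≤
      dataValue (some J) + ∑ k, max 0 (dataPoint (some I) k - dataPoint (some J) k) := by
  have hcard : normOne I ≤
      normOne J + (Finset.univ.filter fun k => I k = true ∧ J k = false).card := by
    unfold normOne
    refine le_trans (Finset.card_le_card fun k hk => ?_) (Finset.card_union_le _ _)
    cases hJ : J k <;> simp_all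
  have hsum : ∑ k, max 0 (dataPoint (some I) k - dataPoint (some J) k)
      = 4/13 * ((Finset.univ.filter fun k => I k = true ∧ J k = false).card : ℝ) := by
    rw [Finset.card_filter, Nat.cast_sum, Finset.mul_sum]
    refine Finset.sum_congr rfl fun k _ => ?_
    simp only [dataPoint, vertex]
    cases I k <;> cases J k <;> norm_num
  rw [hsum]
  exact layerValue_le_add hcard

/-- Compatibility of the value `1` at `(1, …, 1)` with the value prescribed at a vertex. -/
lemma dataValue_none_le (J : Fin 5 → Bool) :
    dataValue none ≤
      dataValue (some J) + ∑ k, max 0 (dataPoint none k - dataPoint (some J) k) := by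
  have hsum : ∑ k, max 0 (dataPoint none k - dataPoint (some J) k)
      = 25/13 - 4/13 * (normOne J : ℝ) := by
    have : ∀ k, max 0 (dataPoint none k - dataPoint (some J) k)
        = 5/13 - 4/13 * (((if J k = true then 1 else 0 : ℕ)) : ℝ) := by
      intro k
      simp only [dataPoint, vertex]
      cases J k <;> norm_num
    rw [normOne, Finset.card_filter, Nat.cast_sum, Finset.mul_sum, Finset.sum_congr rfl
      fun k _ => this k, Finset.sum_sub_distrib]
    norm_num
  have hn : normOne J ≤ 5 := (Finset.card_filter_le _ _).trans (by simp)
  rw [hsum]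
  simp only [dataValue, layerValue]
  interval_cases normOne J <;> norm_num

lemma sum_layerValue :
    ∑ I : Fin 5 → Bool, (-1 : ℝ) ^ (5 - normOne I) * layerValue (normOne I) = -32/13 := by
  -- In units of `4/13` the summands are integers, so the sum can be evaluated by `decide`.
  have hint : ∑ I : Fin 5 → Bool, (-1 : ℤ) ^ (5 - normOne I) *
      (if normOne I ≤ 1 then 0 else if normOne I ≤ 3 then 1 else 2) = -8 := by
    decide +kernel
  have hterm : ∀ I : Fin 5 → Bool, (-1 : ℝ) ^ (5 - normOne I) * layerValue (normOne I) =
      4/13 * (((-1 : ℤ) ^ (5 - normOne I) *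
        (if normOne I ≤ 1 then 0 else if normOne I ≤ 3 then 1 else 2) : ℤ) : ℝ) := by
    intro I
    unfold layerValue
    split_ifs <;> push_cast <;> ring
  rw [Finset.sum_congr rfl fun I _ => hterm I, ← Finset.mul_sum, ← Int.cast_sum, hint]
  norm_num

/-- a 5-quasi-copula whose volume on `[8/13, 12/13]^5`
equals `-32/13`. -/
theorem exists_quasiCopula_dim5_volume_neg
    : ∃ Q : (Fin 5 → ℝ) → ℝ, IsQuasiCopula 5 Q ∧
      (∀ I : Fin 5 → Bool,
        Q (vertex (fun _ => (8:ℝ)/13) (fun _ => (12:ℝ)/13) I) =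
          if normOne I ≤ 1 then 0
          else if normOne I ≤ 3 then 4/13
          else 8/13) ∧
      boxVolume Q (fun _ => (8:ℝ)/13) (fun _ => (12:ℝ)/13) = -32/13 := by
  have hval (I : Fin 5 → Bool) : lowerExt dataPoint dataValue
      (vertex (fun _ => (8:ℝ)/13) (fun _ => (12:ℝ)/13) I) = layerValue (normOne I) := by
    refine lowerExt_eq (j₀ := some I) (layerValue_nonneg _) fun j => ?_
    cases j with
    | none => exact dataValue_none_le I
    | some J => exact dataValue_some_le J I
  refine ⟨lowerExt dataPoint dataValue,
    isQuasiCopula_lowerExt (by norm_num) dataValue_le (j₁ := none) (fun _ => rfl) rfl, hval, ?_⟩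
  simp only [boxVolume, hval, sum_layerValue]

end QC
end

section
/- There exists a 7-quasi-copula Q : [0,1]^7 → [0,1] such that the Q-volume of the box B = [1/2, 1]^7 equals −19/2; explicitly, one may take Q with vertex values depending only on the number ‖I‖₁ of coordinates of the vertex equal to 1, namely Q(x_I) = 0 for ‖I‖₁ ∈ {0,1,2,3}, Q(x_I) = 1/2 for ‖I‖₁ ∈ {4,5,6}, and Q(x_I) = 1 for ‖I‖₁ = 7. In particular, since −19/2 < −(7−1)²/(2·7−1) = −36/13, the conjecture that the minimal Q-volume over all 7-quasi-copulas and all 7-boxes equals −(d−1)²/(2d−1) with d = 7 is false. -/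
/-!
The witness is the smallest nonnegative function on `[0,1]^7` that is nondecreasing, 1-Lipschitz for the
`ℓ¹`-distance, and takes the value `1` at `(1,…,1)` and at least `1/2` at every vertex of
`[1/2,1]^7` with four coordinates equal to `1`. A data point `p` with prescribed value `q` forces
the lower bound `q - ∑ i, (p i - u i)⁺`, and the witness is the maximum of `0` and these bounds.
Each bound is monotone and 1-Lipschitz, hence so is the maximum, and each bound is at most every
coordinate `u i` on the cube (`witness_le_coord`). This gives the boundary conditions and the upper
estimates at the vertices. At a vertex with at most three coordinates `1`, the penalty
`∑ i, (p i - u i)⁺` is at least the prescribed value `q` for every data point `p`, so the witness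
vanishes there. The volume is then
`(-35 + 21 - 7) / 2 + 1 = -19/2`.
-/

namespace QC

/-- The lower bound forced by the value `1` at `(1,…,1)`; it equals `Gd u` for `d = 7`. -/
noncomputable def topBound (u : Fin 7 → ℝ) : ℝ := 1 - ∑ i, (1 - u i)

/-- The lower bound forced by the value `1/2` at the point with coordinates `1` on `S` and `1/2`
off `S`. On `S` the positive part of `1 - u i` is written `1 - u i`, which agrees on the cube. -/
noncomputable def vertexBound (S : Finset (Fin 7)) (u : Fin 7 → ℝ) : ℝ :=
  1 / 2 - ∑ i, if i ∈ S then 1 - u i else max 0 (1 / 2 - u i)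

lemma four_subsets_nonempty :
    (Finset.powersetCard 4 (Finset.univ : Finset (Fin 7))).Nonempty := by
  rw [Finset.powersetCard_nonempty]; simp

/-- The quasi-copula with volume `-19/2` on `[1/2,1]^7`: the maximum of `0` and all the forced
lower bounds. -/
noncomputable def witness (u : Fin 7 → ℝ) : ℝ :=
  max (max 0 (topBound u))
    ((Finset.powersetCard 4 Finset.univ).sup' four_subsets_nonempty fun S => vertexBound S u)

lemma witness_le_iff (u : Fin 7 → ℝ) (c : ℝ) :
    witness u ≤ c ↔
      0 ≤ c ∧ topBound u ≤ c ∧ ∀ S : Finset (Fin 7), S.card = 4 → vertexBound S u ≤ c := by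
  simp [witness, Finset.mem_powersetCard, and_assoc]

lemma witness_nonneg (u : Fin 7 → ℝ) : 0 ≤ witness u :=
  ((witness_le_iff u _).1 le_rfl).1

lemma topBound_le_witness (u : Fin 7 → ℝ) : topBound u ≤ witness u :=
  ((witness_le_iff u _).1 le_rfl).2.1

lemma vertexBound_le_witness (u : Fin 7 → ℝ) {S : Finset (Fin 7)} (hS : S.card = 4) :
    vertexBound S u ≤ witness u :=
  ((witness_le_iff u _).1 le_rfl).2.2 S hS

lemma vertexBound_summand_nonneg {u : Fin 7 → ℝ} (hu : InCube u) (S : Finset (Fin 7))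
    (i : Fin 7) : 0 ≤ if i ∈ S then 1 - u i else max 0 (1 / 2 - u i) := by
  split_ifs
  · linarith [(hu i).2]
  · exact le_max_left _ _

lemma witness_le_coord {u : Fin 7 → ℝ} (hu : InCube u) (i : Fin 7) : witness u ≤ u i := by
  refine (witness_le_iff _ _).2 ⟨(hu i).1, ?_, fun S _ => ?_⟩
  · have := Finset.single_le_sum (f := fun j => 1 - u j)
      (fun j _ => by linarith [(hu j).2]) (Finset.mem_univ i)
    simp only [topBound]
    linarith
  · have := Finset.single_le_sum (fun j _ => vertexBound_summand_nonneg hu S j)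
      (Finset.mem_univ i)
    have h : 1 / 2 - u i ≤ if i ∈ S then 1 - u i else max 0 (1 / 2 - u i) := by
      split_ifs
      · linarith
      · exact le_max_right _ _
    simp only [vertexBound]
    linarith

/-- One inequality behind both monotonicity (`w = 0`) and the Lipschitz condition
(`w i = |u i - v i|`). -/
lemma witness_le_add {u v w : Fin 7 → ℝ} (hw : ∀ i, 0 ≤ w i) (h : ∀ i, u i ≤ v i + w i) :
    witness u ≤ witness v + ∑ i, w i := by
  have hw' : 0 ≤ ∑ i, w i := Finset.sum_nonneg fun i _ => hw i
  refine (witness_le_iff _ _).2 ⟨add_nonneg (witness_nonneg v) hw', ?_, fun S hS => ?_⟩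
  · refine le_trans ?_ (add_le_add_left (topBound_le_witness v) _)
    have : ∑ i, (1 - v i) ≤ ∑ i, ((1 - u i) + w i) :=
      Finset.sum_le_sum fun i _ => by linarith [h i]
    rw [Finset.sum_add_distrib] at this
    simp only [topBound]
    linarith
  · refine le_trans ?_ (add_le_add_left (vertexBound_le_witness v hS) _)
    have : ∑ i, (if i ∈ S then 1 - v i else max 0 (1 / 2 - v i)) ≤
        ∑ i, ((if i ∈ S then 1 - u i else max 0 (1 / 2 - u i)) + w i) := by
      refine Finset.sum_le_sum fun i _ => ?_
      split_ifs
      · linarith [h i]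
      · refine max_le (add_nonneg (le_max_left _ _) (hw i)) ?_
        linarith [h i, le_max_right 0 (1 / 2 - u i)]
    rw [Finset.sum_add_distrib] at this
    simp only [vertexBound]
    linarith

lemma witness_isQuasiCopula : IsQuasiCopula 7 witness where
  mem u hu := ⟨witness_nonneg u, (witness_le_coord hu 0).trans (hu 0).2⟩
  bc0 := by
    rintro u hu ⟨i, hi⟩
    exact le_antisymm (hi ▸ witness_le_coord hu i) (witness_nonneg u)
  bc1 i t ht := by
    have hu : InCube (fun j : Fin 7 => if j = i then t else 1) := by
      intro j
      dsimp only
      split_ifs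
      · exact ht
      · simp
    refine le_antisymm ((witness_le_coord hu i).trans_eq (by simp))
      (le_trans (le_of_eq ?_) (topBound_le_witness _))
    have : ∀ j, (1 - if j = i then t else 1) = if j = i then 1 - t else 0 := by
      intro j; split_ifs <;> simp
    simp [topBound, this]
  mono i u v _ _ h hi := by
    have := witness_le_add (u := u) (v := v) (w := 0) (fun _ => le_rfl) fun j => by
      by_cases hj : j = i
      · subst hj; simpa using hi
      · simp [h j hj]
    simpa using this
  lip u v _ _ := by
    have h1 := witness_le_add (u := u) (v := v) (w := fun i => |u i - v i|)
      (fun _ => abs_nonneg _) fun i => by linarith [le_abs_self (u i - v i)]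
    have h2 := witness_le_add (u := v) (v := u) (w := fun i => |u i - v i|)
      (fun _ => abs_nonneg _) fun i => by linarith [neg_abs_le (u i - v i)]
    rw [abs_le]
    constructor <;> linarith

lemma witness_vertex (I : Fin 7 → Bool) :
    witness (vertex (fun _ => (1:ℝ)/2) (fun _ => (1:ℝ)) I) =
      if normOne I ≤ 3 then 0 else if normOne I ≤ 6 then 1/2 else 1 := by
  set x := vertex (fun _ => (1:ℝ)/2) (fun _ => (1:ℝ)) I with hx
  have hT : ∀ i, I i = true → x i = 1 := fun i hi => by simp [hx, vertex, hi]
  have hF : ∀ i, I i = false → x i = 1 / 2 := fun i hi => by simp [hx, vertex, hi]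
  have hcube : InCube x := by
    intro i
    cases hi : I i
    · rw [hF i hi]; norm_num
    · rw [hT i hi]; norm_num
  -- a set of coordinates larger than `‖I‖₁` contains one where the vertex equals `1/2`
  have hex : ∀ S : Finset (Fin 7), normOne I < S.card → ∃ i ∈ S, I i = false := by
    intro S hS
    by_contra! hc
    refine absurd (Finset.card_le_card (s := S) (t := Finset.univ.filter fun k => I k = true)
      fun i hi => ?_) (not_le.2 hS)
    simpa using hc i hi
  split_ifs with h3 h6
  · refine le_antisymm ((witness_le_iff _ _).2 ⟨le_rfl, ?_, fun S hS => ?_⟩) (witness_nonneg _)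
    · have hsum : ∑ i, (1 - x i) = (7 - normOne I) / 2 := by
        have : ∀ i, 1 - x i = 1 / 2 - (if I i = true then 1 / 2 else 0) := by
          intro i
          cases hi : I i
          · rw [hF i hi]; norm_num
          · rw [hT i hi]; norm_num
        simp_rw [this]
        rw [Finset.sum_sub_distrib, ← Finset.sum_filter]
        simp only [Finset.sum_const, Finset.card_univ, Fintype.card_fin, nsmul_eq_mul, normOne]
        push_cast
        ring
      have : (normOne I : ℝ) ≤ 3 := by exact_mod_cast h3
      simp only [topBound, hsum]
      linarith
    · obtain ⟨i, hiS, hi⟩ := hex S (by omega)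
      have := Finset.single_le_sum (fun j _ => vertexBound_summand_nonneg hcube S j)
        (Finset.mem_univ i)
      rw [if_pos hiS, hF i hi] at this
      simp only [vertexBound]
      linarith
  · obtain ⟨i, -, hi⟩ := hex Finset.univ (by simp; omega)
    refine le_antisymm ((witness_le_coord hcube i).trans_eq (hF i hi)) ?_
    obtain ⟨S, hSI, hS⟩ := Finset.exists_subset_card_eq
      (s := Finset.univ.filter fun k => I k = true) (n := 4)
      (by change 4 ≤ normOne I; omega)
    refine le_trans (le_of_eq ?_) (vertexBound_le_witness x hS)
    have : ∑ i, (if i ∈ S then 1 - x i else max 0 (1 / 2 - x i)) = 0 := by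
      refine Finset.sum_eq_zero fun i _ => ?_
      split_ifs with hiS
      · rw [hT i (by simpa using hSI hiS)]; norm_num
      · cases hi : I i
        · rw [hF i hi]; norm_num
        · rw [hT i hi]; norm_num
    rw [vertexBound, this, sub_zero]
  · have hall : ∀ i, I i = true := by
      have hle : normOne I = (Finset.univ : Finset (Fin 7)).card := by
        refine le_antisymm (Finset.card_le_univ _) ?_
        simp; omega
      intro i
      have := Finset.eq_univ_iff_forall.1 (Finset.eq_univ_of_card _ hle) i
      simpa using this
    refine le_antisymm ((witness_le_coord hcube 0).trans (hcube 0).2) ?_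
    refine le_trans (le_of_eq ?_) (topBound_le_witness x)
    simp [topBound, hT _ (hall _)]

/-- The alternating sum of the doubled vertex values, which are integers. -/
lemma alternating_sum :
    ∑ I : Fin 7 → Bool, (-1 : ℤ) ^ (7 - normOne I) *
      (if normOne I ≤ 3 then 0 else if normOne I ≤ 6 then 1 else 2) = -19 := by
  decide +kernel

lemma boxVolume_witness : boxVolume witness (fun _ => (1:ℝ)/2) (fun _ => 1) = -19/2 := by
  have h := congrArg (Int.cast : ℤ → ℝ) alternating_sum
  push_cast at h
  have h2 : boxVolume witness (fun _ => (1:ℝ)/2) (fun _ => 1) * 2 = -19 := by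
    rw [← h, boxVolume, Finset.sum_mul]
    refine Finset.sum_congr rfl fun I _ => ?_
    rw [witness_vertex, mul_assoc]
    congr 1
    split_ifs <;> norm_num
  linarith

/-- a 7-quasi-copula whose volume on `[1/2, 1]^7` equals `-19/2`;
consequently the conjecture that the minimal `Q`-volume in dimension 7 equals
`-(7-1)^2/(2·7-1) = -36/13` is false. -/
theorem exists_quasiCopula_dim7_volume_neg_and_conjecture_false
    : (∃ Q : (Fin 7 → ℝ) → ℝ, IsQuasiCopula 7 Q ∧
        (∀ I : Fin 7 → Bool,
          Q (vertex (fun _ => (1:ℝ)/2) (fun _ => (1:ℝ)) I) =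
            if normOne I ≤ 3 then 0
            else if normOne I ≤ 6 then 1/2
            else 1) ∧
        boxVolume Q (fun _ => (1:ℝ)/2) (fun _ => 1) = -19/2) ∧
      ((-19/2 : ℝ) < -(((7:ℝ) - 1)^2 / (2 * 7 - 1))) ∧
      ¬ IsLeast {v : ℝ | ∃ (Q : (Fin 7 → ℝ) → ℝ) (a b : Fin 7 → ℝ),
            IsQuasiCopula 7 Q ∧ IsBox a b ∧ boxVolume Q a b = v}
          (-(((7:ℝ) - 1)^2 / (2 * 7 - 1))) := by
  refine ⟨⟨witness, witness_isQuasiCopula, witness_vertex, boxVolume_witness⟩, by norm_num, ?_⟩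
  intro h
  have := h.2 ⟨witness, fun _ => 1 / 2, fun _ => 1, witness_isQuasiCopula,
    fun _ => by norm_num, boxVolume_witness⟩
  norm_num at this

end QC
end
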